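/- For any two convex bodies A and B in ℝ², there exist an invertible affine map T : ℝ² → ℝ², a point c ∈ ℝ² and a real number λ with 1 ≤ λ ≤ (19 − √73)/4 such that T(A) ⊆ B ⊆ c + λ • (T(A) − c) (i.e. B is contained in the homothety of T(A) with center c and ratio λ). In particular, the Banach–Mazur diameter of the family of planar convex bodies is at most (19 − √73)/4 < 2.614. -/

import Mathlib

/-- A convex body in the plane: compact, convex, with nonempty interior. -/
def IsConvexBody (A : Set (ℝ × ℝ)) : Prop :=
  Convex ℝ A ∧ IsCompact A ∧ (interior A).Nonempty

/-!
Inscribe a triangle of maximal area in a planar convex body. In its barycentric coordinates the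
body lies in `x i ≤ 1`, and it reaches past the `i`-th side exactly to `x i = -a i` for some depth
`a i ≥ 0`. The determinant of the coordinates of any three points of the body is at most `1`; for
the deepest points this gives the inequalities of `IsProfile` between the sorted depths.
Conversely, the triangle and its deepest points already span every point of coordinate sum `1` with
`z i + a i * z j ≥ 0` for all `i ≠ j`. For two bodies with matched triangles this decides which
positive or negative multiples of one fit into the other, and mutual placements with factors `k`
and `k'` bound the Banach–Mazur distance by `1 / (k * k')`. That placements of the same sign with
`1 / (k * k') ≤ 13 / 5 < (19 - √73) / 4` exist is an inequality between the two profiles, which is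
verified by interval bisection in integer arithmetic.
-/

open Set

namespace BanachMazur

section AffineBasis

variable {ι k V W : Type*} [Fintype ι] [AddCommGroup V] [AddCommGroup W]

theorem det_toMatrix_update [CommRing k] [Module k V] [DecidableEq ι] (T : AffineBasis ι k V)
    (i : ι) (x : V) : (T.toMatrix (Function.update T i x)).det = T.coord i x := by
  have h : T.toMatrix (Function.update T i x) = (1 : Matrix ι ι k).updateRow i (T.coords x) := by
    ext j l
    rcases eq_or_ne j i with rfl | hj
    · simp
    · simp [hj, T.coord_apply, Matrix.one_apply, eq_comm]
  rw [h, ← Matrix.cramer_transpose_apply, Matrix.transpose_one, Matrix.cramer_one]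
  simp

theorem toMatrix_mul_toMatrix [Ring k] [Module k V] (b T : AffineBasis ι k V) (q : ι → V) :
    T.toMatrix q * b.toMatrix T = b.toMatrix q := by
  ext i j
  exact congr_fun (b.toMatrix_vecMul_coords T (q i)) j

theorem coord_sum_smul [Ring k] [Module k V] (T : AffineBasis ι k V) {w : ι → k}
    (hw : ∑ i, w i = 1) (i : ι) : T.coord i (∑ j, w j • T j) = w i := by
  rw [← Finset.affineCombination_eq_linear_combination _ _ _ hw]
  exact T.coord_apply_combination_of_mem (Finset.mem_univ i) hw

theorem exists_affineEquiv_eq_sum [CommRing k] [Module k V] [Module k W] (S : AffineBasis ι k V)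
    (T : AffineBasis ι k W) :
    ∃ φ : V ≃ᵃ[k] W, (∀ x, φ x = ∑ i, S.coord i x • T i) ∧
      ∀ y, φ.symm y = ∑ i, T.coord i y • S i := by
  let f : V →ᵃ[k] W := (Fintype.linearCombination k T).toAffineMap.comp S.coords
  let g : W → V := fun y => ∑ i, T.coord i y • S i
  have hf (x) : f x = ∑ i, S.coord i x • T i := rfl
  have hgf : Function.LeftInverse g f := fun x => by
    simp only [g, hf, coord_sum_smul T (S.sum_coord_apply_eq_one x),
      S.linear_combination_coord_eq_self]
  have hfg : Function.RightInverse g f := fun y => by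
    simp only [g, hf, coord_sum_smul S (T.sum_coord_apply_eq_one y),
      T.linear_combination_coord_eq_self]
  have hbij : Function.Bijective f := ⟨hgf.injective, hfg.surjective⟩
  exact ⟨.ofBijective hbij, hf, fun y => (AffineEquiv.symm_apply_eq _).2 (hfg y).symm⟩

theorem exists_affineBasis_mem [Field k] [Module k V] [FiniteDimensional k V] {A : Set V} {n : ℕ}
    (hn : Module.finrank k V = n) (hA : affineSpan k A = ⊤) :
    ∃ b : AffineBasis (Fin (n + 1)) k V, ∀ i, b i ∈ A := by
  obtain ⟨s, hsA, b, hb⟩ := AffineBasis.exists_affine_subbasis hA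
  have := b.finite_set.fintype
  have e : s ≃ Fin (n + 1) := Fintype.equivFinOfCardEq (by rw [b.card_eq_finrank_add_one, hn])
  exact ⟨b.reindex e, fun i => by simpa [hb] using hsA (e.symm i).2⟩

end AffineBasis

section Frame

variable {ι V : Type*} [Fintype ι] [DecidableEq ι]

/-- `T` is a simplex of maximal volume with vertices in `A`, and `a i` is the depth of `A` beyond
the facet of `T` opposite to `T i`. Volumes relative to `T` are determinants of barycentric
coordinates; depths are relative to the heights of `T`. -/
structure IsFrame [AddCommGroup V] [Module ℝ V] (A : Set V) (T : AffineBasis ι ℝ V)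
    (a : ι → ℝ) : Prop where
  mem : ∀ i, T i ∈ A
  abs_det_le_one : ∀ p : ι → V, (∀ i, p i ∈ A) → |(T.toMatrix p).det| ≤ 1
  isLeast : ∀ i, IsLeast (T.coord i '' A) (-a i)

namespace IsFrame

variable [AddCommGroup V] [Module ℝ V] {A : Set V} {T : AffineBasis ι ℝ V} {a : ι → ℝ}

theorem coord_le_one (hT : IsFrame A T a) {x : V} (hx : x ∈ A) (i : ι) : T.coord i x ≤ 1 := by
  rw [← det_toMatrix_update]
  refine (le_abs_self _).trans (hT.abs_det_le_one _ fun j => ?_)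
  rcases eq_or_ne j i with rfl | hj
  · simpa
  · simpa [hj] using hT.mem j

theorem neg_le_coord (hT : IsFrame A T a) {x : V} (hx : x ∈ A) (i : ι) : -a i ≤ T.coord i x :=
  (hT.isLeast i).2 (mem_image_of_mem _ hx)

theorem nonneg [Nontrivial ι] (hT : IsFrame A T a) (i : ι) : 0 ≤ a i := by
  obtain ⟨j, hj⟩ := exists_ne i
  simpa [T.coord_apply_ne hj.symm] using hT.neg_le_coord (hT.mem j) i

theorem reindex {κ : Type*} [Fintype κ] [DecidableEq κ] (hT : IsFrame A T a) (e : ι ≃ κ) :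
    IsFrame A (T.reindex e) (a ∘ e.symm) where
  mem i := hT.mem (e.symm i)
  abs_det_le_one p hp := by
    have h : (T.reindex e).toMatrix p = (T.toMatrix (p ∘ e)).submatrix e.symm e.symm := by
      ext i j
      simp
    rw [h, Matrix.det_submatrix_equiv_self]
    exact hT.abs_det_le_one _ fun i => hp (e i)
  isLeast i := by simpa using hT.isLeast (e.symm i)

theorem exists_antitone {n : ℕ} {T : AffineBasis (Fin n) ℝ V} {a : Fin n → ℝ}
    (hT : IsFrame A T a) :
    ∃ (T' : AffineBasis (Fin n) ℝ V) (a' : Fin n → ℝ), IsFrame A T' a' ∧ Antitone a' :=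
  ⟨_, _, hT.reindex (Tuple.sort (-a)).symm,
    fun _ _ h => neg_le_neg_iff.1 (Tuple.monotone_sort (-a) h)⟩

theorem sum_smul_mem_of_neg [Nontrivial ι] (hA : Convex ℝ A) (hT : IsFrame A T a) {z : ι → ℝ}
    (hz : ∑ i, z i = 1) {i : ι} (hi : z i < 0) (h : ∀ j, i ≠ j → 0 ≤ z i + a i * z j) :
    ∑ i, z i • T i ∈ A := by
  obtain ⟨⟨p, hp, hpi⟩, -⟩ := hT.isLeast i
  have hai : 0 < a i := by
    refine (hT.nonneg i).lt_of_ne fun h0 => ?_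
    obtain ⟨j, hj⟩ := exists_ne i
    have := h j hj.symm
    rw [← h0] at this
    linarith
  -- The deepest point `p` gets the weight `u` that makes the remaining weight of `T i` vanish.
  set u := -z i / a i with hu
  have hu0 : 0 ≤ u := div_nonneg (by linarith) hai.le
  have hzu (j : ι) : 0 ≤ z j - u * T.coord j p := by
    rcases eq_or_ne j i with rfl | hj
    · rw [hpi, hu, mul_neg, div_mul_cancel₀ _ hai.ne', neg_neg, sub_self]
    · have huj : u ≤ z j := (div_le_iff₀ hai).2 (by linarith [h j hj.symm])
      linarith [mul_le_mul_of_nonneg_left (hT.coord_le_one hp j) hu0]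
  have hsum : ∑ i, z i • T i = u • p + ∑ j, (z j - u * T.coord j p) • T j := by
    simp only [sub_smul, mul_smul, Finset.sum_sub_distrib, ← Finset.smul_sum,
      T.linear_combination_coord_eq_self, add_sub_cancel]
  have hmem := hA.sum_mem (t := Finset.univ)
    (w := fun o : Option ι => o.elim u fun j => z j - u * T.coord j p) (z := fun o => o.elim p T)
    (fun o _ => by cases o; exacts [hu0, hzu _])
    (by simp [Fintype.sum_option, hz, ← Finset.mul_sum])
    (fun o _ => by cases o; exacts [hp, hT.mem _])
  rw [hsum]
  simpa only [Fintype.sum_option, Option.elim_none, Option.elim_some] using hmem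

theorem sum_smul_mem [Nontrivial ι] (hA : Convex ℝ A) (hT : IsFrame A T a) {z : ι → ℝ}
    (hz : ∑ i, z i = 1) (h : ∀ i j, i ≠ j → 0 ≤ z i + a i * z j) : ∑ i, z i • T i ∈ A := by
  by_cases! hneg : ∃ i, z i < 0
  · obtain ⟨i, hi⟩ := hneg
    exact hT.sum_smul_mem_of_neg hA hz hi (h i)
  · exact hA.sum_mem (fun i _ => hneg i) hz fun i _ => hT.mem i

end IsFrame

variable [NormedAddCommGroup V] [NormedSpace ℝ V] [FiniteDimensional ℝ V] {A : Set V}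

theorem exists_abs_det_toMatrix_le_one (hA : IsCompact A) (b : AffineBasis ι ℝ V)
    (hb : ∀ i, b i ∈ A) : ∃ T : AffineBasis ι ℝ V, (∀ i, T i ∈ A) ∧
      ∀ p : ι → V, (∀ i, p i ∈ A) → |(T.toMatrix p).det| ≤ 1 := by
  have hcont : Continuous fun p : ι → V => |(b.toMatrix p).det| := by
    refine (Continuous.matrix_det (continuous_matrix fun i j => ?_)).abs
    exact (continuous_barycentric_coord b j).comp (continuous_apply i)
  obtain ⟨q, hqA, hq⟩ := (isCompact_univ_pi fun _ : ι => hA).exists_isMaxOn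
    ⟨b, fun i _ => hb i⟩ hcont.continuousOn
  have hdet : (b.toMatrix q).det ≠ 0 := by
    have h1 : (1 : ℝ) ≤ |(b.toMatrix q).det| := by
      simpa using hq (show ⇑b ∈ univ.pi fun _ => A from fun i _ => hb i)
    exact abs_pos.1 (one_pos.trans_le h1)
  obtain ⟨T, rfl⟩ : ∃ T : AffineBasis ι ℝ V, ⇑T = q := by
    obtain ⟨hind, hspan⟩ :=
      (b.isUnit_toMatrix_iff q).1 ((Matrix.isUnit_iff_isUnit_det _).2 hdet.isUnit)
    exact ⟨⟨q, hind, hspan⟩, rfl⟩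
  refine ⟨T, fun i => hqA i trivial, fun p hp => ?_⟩
  refine le_of_mul_le_mul_right ?_ (abs_pos.2 hdet)
  rw [one_mul, ← abs_mul, ← Matrix.det_mul, toMatrix_mul_toMatrix]
  exact hq fun i _ => hp i

theorem exists_isFrame (hA : IsCompact A) (b : AffineBasis ι ℝ V) (hb : ∀ i, b i ∈ A) :
    ∃ (T : AffineBasis ι ℝ V) (a : ι → ℝ), IsFrame A T a := by
  obtain ⟨T, hTA, hT⟩ := exists_abs_det_toMatrix_le_one hA b hb
  have hmin (i : ι) : ∃ m, IsLeast (T.coord i '' A) m :=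
    (hA.image (continuous_barycentric_coord T i)).exists_isLeast ⟨_, mem_image_of_mem _ (hTA i)⟩
  choose m hm using hmin
  exact ⟨T, -m, hTA, hT, fun i => by simpa using hm i⟩

end Frame

section Profile

/-- The inequalities satisfied by the sorted depths of a planar convex body beyond the sides of an
inscribed triangle of maximal area. -/
structure IsProfile (a : Fin 3 → ℝ) : Prop where
  nonneg : ∀ i, 0 ≤ a i
  antitone : Antitone a
  mul_le_one : a 0 * (1 + a 1) ≤ 1
  add_mul_le_one : (a 1 + a 2) * (1 + a 0) ≤ 1

theorem IsProfile.le_one {a : Fin 3 → ℝ} (ha : IsProfile a) (i : Fin 3) : a i ≤ 1 := by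
  have h0 : a i ≤ a 0 := ha.antitone (Fin.zero_le i)
  nlinarith [ha.mul_le_one, ha.nonneg 0, ha.nonneg 1]

-- The left-hand side of `hdet` is the determinant of `(-a₀, x, 1 + a₀ - x)`,
-- `(y, -a₁, 1 + a₁ - y)` and `(z, 1 + a₂ - z, -a₂)`, expanded around `y = z = 1`.
theorem add_mul_le_one_of_det {a₀ a₁ a₂ x y z : ℝ} (h01 : a₁ ≤ a₀) (h12 : a₂ ≤ a₁)
    (hx : x ∈ Icc a₀ 1) (hy : y ∈ Icc a₁ 1) (hz : z ∈ Icc a₂ 1)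
    (hdet : (a₁ + a₂) * (1 + a₀) + (1 - y) * (x - a₂) + (1 - z) * (1 + a₀ - x - a₁)
      - (1 - y) * (1 - z) ≤ 1) : (a₁ + a₂) * (1 + a₀) ≤ 1 := by
  by_contra! hc
  obtain ⟨⟨hx0, hx1⟩, ⟨hy0, hy1⟩, hz0, hz1⟩ := And.intro hx (And.intro hy hz)
  have hy' : 1 + a₀ - x - a₁ < 1 - y := by
    by_contra! hn
    nlinarith [mul_nonneg (show 0 ≤ 1 - y by linarith) (show 0 ≤ x - a₂ by linarith),
      mul_le_mul_of_nonneg_right hn (show 0 ≤ 1 - z by linarith)]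
  have hz' : x - a₂ < 1 - z := by
    by_contra! hn
    nlinarith [mul_nonneg (show 0 ≤ 1 - z by linarith) (show 0 ≤ 1 + a₀ - x - a₁ by linarith),
      mul_le_mul_of_nonneg_left hn (show 0 ≤ 1 - y by linarith)]
  have hprod := mul_le_mul (show (1 - y) - (1 + a₀ - x - a₁) ≤ x - a₀ by linarith)
    (show (1 - z) - (x - a₂) ≤ 1 - x by linarith) (by linarith) (by linarith)
  nlinarith [mul_nonneg (sub_nonneg.2 h01) (show 0 ≤ 1 - a₂ by linarith),
    mul_nonneg (sub_nonneg.2 h12) (sub_nonneg.2 hx1)]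

variable {V : Type*} {A : Set V} {a : Fin 3 → ℝ}

section Module

variable [AddCommGroup V] [Module ℝ V] {T : AffineBasis (Fin 3) ℝ V}

theorem IsFrame.det_le_one (hT : IsFrame A T a) {p q r : V} (hp : p ∈ A) (hq : q ∈ A)
    (hr : r ∈ A) :
    T.coord 0 p * (T.coord 1 q * T.coord 2 r - T.coord 2 q * T.coord 1 r)
      - T.coord 1 p * (T.coord 0 q * T.coord 2 r - T.coord 2 q * T.coord 0 r)
      + T.coord 2 p * (T.coord 0 q * T.coord 1 r - T.coord 1 q * T.coord 0 r) ≤ 1 := by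
  refine le_trans (le_of_eq ?_) ((le_abs_self _).trans
    (hT.abs_det_le_one ![p, q, r] (by simp [Fin.forall_fin_succ, hp, hq, hr])))
  simp only [Matrix.det_fin_three, AffineBasis.toMatrix_apply, Matrix.cons_val]
  ring

theorem IsFrame.isProfile (hT : IsFrame A T a) (ha : Antitone a) : IsProfile a := by
  obtain ⟨⟨p, hp, hp0⟩, -⟩ := hT.isLeast 0
  obtain ⟨⟨q, hq, hq1⟩, -⟩ := hT.isLeast 1
  obtain ⟨⟨r, hr, hr2⟩, -⟩ := hT.isLeast 2
  have h01 : a 1 ≤ a 0 := ha (by decide)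
  have h12 : a 2 ≤ a 1 := ha (by decide)
  have hp2 : T.coord 2 p = 1 + a 0 - T.coord 1 p := by
    linarith [T.sum_coord_apply_eq_one p, Fin.sum_univ_three fun i => T.coord i p]
  have hq2 : T.coord 2 q = 1 + a 1 - T.coord 0 q := by
    linarith [T.sum_coord_apply_eq_one q, Fin.sum_univ_three fun i => T.coord i q]
  have hr1 : T.coord 1 r = 1 + a 2 - T.coord 0 r := by
    linarith [T.sum_coord_apply_eq_one r, Fin.sum_univ_three fun i => T.coord i r]
  have hx : T.coord 1 p ∈ Icc (a 0) 1 := ⟨by linarith [hT.coord_le_one hp 2], hT.coord_le_one hp 1⟩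
  have hy : T.coord 0 q ∈ Icc (a 1) 1 := ⟨by linarith [hT.coord_le_one hq 2], hT.coord_le_one hq 0⟩
  have hz : T.coord 0 r ∈ Icc (a 2) 1 := ⟨by linarith [hT.coord_le_one hr 1], hT.coord_le_one hr 0⟩
  have hdet := hT.det_le_one hp hq hr
  have hdet' := hT.det_le_one hp hq (hT.mem 1)
  rw [hp0, hp2, hq1, hq2, hr1, hr2] at hdet
  rw [hp0, hp2, hq1, hq2, T.coord_apply_eq, T.coord_apply_ne (by decide : (0 : Fin 3) ≠ 1),
    T.coord_apply_ne (by decide : (2 : Fin 3) ≠ 1)] at hdet'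
  refine ⟨hT.nonneg, ha, ?_, ?_⟩
  · linarith [mul_nonneg (sub_nonneg.2 hx.2) ((hT.nonneg 1).trans hy.1)]
  · exact add_mul_le_one_of_det h01 h12 hx hy hz (by linarith)

end Module

theorem exists_isFrame_isProfile [NormedAddCommGroup V] [NormedSpace ℝ V]
    (hV : Module.finrank ℝ V = 2) (hA : IsCompact A) (hspan : affineSpan ℝ A = ⊤) :
    ∃ (T : AffineBasis (Fin 3) ℝ V) (a : Fin 3 → ℝ), IsFrame A T a ∧ IsProfile a := by
  have := Module.finite_of_finrank_eq_succ hV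
  obtain ⟨b, hb⟩ := exists_affineBasis_mem hV hspan
  obtain ⟨T, a, hT⟩ := exists_isFrame hA b hb
  obtain ⟨T', a', hT', ha'⟩ := hT.exists_antitone
  exact ⟨T', a', hT', hT'.isProfile ha'⟩

end Profile

section Placement

/-- The factor by which a body with frame depths `a` has to be enlarged to contain a translate of
a body with frame depths `b` when the two frames are equally oriented. -/
def posScale (a b : Fin 3 → ℝ) : ℝ := 1 + ∑ i, (1 - a i) * b i

/-- The vectors `e` for which the oppositely oriented copy `x ↦ (1 - e - x) / negScale e` of a body
with frame depths `b`, written in barycentric coordinates, fits into a body with frame depths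
`a`. -/
structure IsSlack (a b e : Fin 3 → ℝ) : Prop where
  nonneg : ∀ i, 0 ≤ e i
  add_mul_le : ∀ i j k, i ≠ j → i ≠ k → j ≠ k → e i + a i * e j ≤ a i * (1 - b k)

/-- The analogue of `posScale` for oppositely oriented frames and the slack `e`. -/
def negScale (e : Fin 3 → ℝ) : ℝ := 2 - ∑ i, e i

/-- Bodies with frame depths `a` and `b` can be placed in each other, with the same orientation
both times, such that the product of the two enlargement factors is at most `13 / 5`. -/
def HasPlacement (a b : Fin 3 → ℝ) : Prop :=
  posScale a b * posScale b a ≤ 13 / 5 ∨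
    ∃ e f, IsSlack a b e ∧ IsSlack b a f ∧ negScale e * negScale f ≤ 13 / 5

variable {a b e : Fin 3 → ℝ}

theorem HasPlacement.symm : HasPlacement a b → HasPlacement b a := by
  rintro (h | ⟨e, f, he, hf, h⟩)
  · exact .inl (mul_comm (posScale a b) _ ▸ h)
  · exact .inr ⟨f, e, hf, he, mul_comm (negScale e) _ ▸ h⟩

theorem posScale_pos (ha : ∀ i, a i ≤ 1) (hb : ∀ i, 0 ≤ b i) : 0 < posScale a b :=
  add_pos_of_pos_of_nonneg one_pos
    (Finset.sum_nonneg fun i _ => mul_nonneg (sub_nonneg.2 (ha i)) (hb i))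

theorem four_mul_posScale_mul_posScale (a b : Fin 3 → ℝ) :
    4 * (posScale a b * posScale b a) =
      (2 + ∑ i, (a i + b i - 2 * a i * b i)) ^ 2 - (∑ i, a i - ∑ i, b i) ^ 2 := by
  simp only [posScale, Fin.sum_univ_three]
  ring

theorem IsSlack.zero (ha : IsProfile a) (hb : IsProfile b) : IsSlack a b 0 where
  nonneg _ := le_rfl
  add_mul_le i _ k _ _ _ := by
    simpa using mul_nonneg (ha.nonneg i) (sub_nonneg.2 (hb.le_one k))

theorem IsSlack.add_le (ha : IsProfile a) (hb : IsProfile b) (he : IsSlack a b e) {i j k : Fin 3}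
    (hij : i ≠ j) (hik : i ≠ k) (hjk : j ≠ k) : e i + e j ≤ 1 - b k := by
  have hj : e j ≤ 1 - b k := by
    nlinarith [he.add_mul_le j i k hij.symm hjk hik, mul_nonneg (ha.nonneg j) (he.nonneg i),
      mul_nonneg (sub_nonneg.2 (ha.le_one j)) (sub_nonneg.2 (hb.le_one k))]
  nlinarith [he.add_mul_le i j k hij hik hjk,
    mul_nonneg (sub_nonneg.2 (ha.le_one i)) (sub_nonneg.2 hj)]

theorem IsSlack.negScale_pos (ha : IsProfile a) (hb : IsProfile b) (he : IsSlack a b e) :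
    0 < negScale e := by
  have h01 := he.add_le ha hb (i := 0) (j := 1) (k := 2) (by decide) (by decide) (by decide)
  have h02 := he.add_le ha hb (i := 0) (j := 2) (k := 1) (by decide) (by decide) (by decide)
  have h12 := he.add_le ha hb (i := 1) (j := 2) (k := 0) (by decide) (by decide) (by decide)
  simp only [negScale, Fin.sum_univ_three]
  linarith [hb.nonneg 0, hb.nonneg 1, hb.nonneg 2]

end Placement

section Algorithm

-- The kernel evaluates the bare `Nat` functions natively, whereas it would unfold the instances
-- behind `+`, `max` or `≤` again at every step of the computation.
local infixl:65 "+ₙ" => Nat.add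
local infixl:65 "-ₙ" => Nat.sub
local infixl:70 "*ₙ" => Nat.mul
local infixl:70 "/ₙ" => Nat.div
local infix:50 "≤ₙ" => Nat.ble
local infix:50 "<ₙ" => Nat.blt

/-- The maximum, built from natively evaluated functions. -/
def natMax (m n : ℕ) : ℕ := m +ₙ (n -ₙ m)

/-- The minimum, built from natively evaluated functions. -/
def natMin (m n : ℕ) : ℕ := m -ₙ (m -ₙ n)

/-- The function `x + y - 2 * x * y`, multiplied by `1000 ^ 2`, at `x = m / 1000`,
`y = n / 1000`. -/
def mix (m n : ℕ) : ℕ := 1000 *ₙ (m +ₙ n) -ₙ 2 *ₙ (m *ₙ n)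

/-- The maximum of `mix` over the corners of the rectangle `[l₁, h₁] × [l₂, h₂]`. -/
def mixBound (l₁ h₁ l₂ h₂ : ℕ) : ℕ :=
  natMax (natMax (mix l₁ l₂) (mix l₁ h₂)) (natMax (mix h₁ l₂) (mix h₁ h₂))

/-- The grid point `(x, y, z) / 1000` of `Fin 3 → ℝ`. -/
structure Grid where
  (x y z : ℕ)

namespace Grid

/-- The coordinate sum, multiplied by `1000`. -/
def total (a : Grid) : ℕ := a.x +ₙ a.y +ₙ a.z

/-- The numbers `1 - b i`, multiplied by `1000 ^ 2`. -/
def room (b : Grid) : Grid :=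
  ⟨1000 *ₙ (1000 -ₙ b.x), 1000 *ₙ (1000 -ₙ b.y), 1000 *ₙ (1000 -ₙ b.z)⟩

/-- Whether `u i + a j * u j ≤ 1 - b k` for all distinct `i`, `j`, `k`, where `r = b.room`. If so,
the products `a i * u i` form a slack. -/
def feasible (a r u : Grid) : Bool :=
  (1000 *ₙ u.x +ₙ a.y *ₙ u.y ≤ₙ r.z) && (1000 *ₙ u.y +ₙ a.x *ₙ u.x ≤ₙ r.z) &&
  (1000 *ₙ u.x +ₙ a.z *ₙ u.z ≤ₙ r.y) && (1000 *ₙ u.z +ₙ a.x *ₙ u.x ≤ₙ r.y) &&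
  (1000 *ₙ u.y +ₙ a.z *ₙ u.z ≤ₙ r.x) && (1000 *ₙ u.z +ₙ a.y *ₙ u.y ≤ₙ r.x)

/-- The sum of the slack `a i * u i`, multiplied by `1000 ^ 2`, or `0` if `u` is not feasible. -/
def gain (a r u : Grid) : ℕ :=
  bif feasible a r u then a.x *ₙ u.x +ₙ a.y *ₙ u.y +ₙ a.z *ₙ u.z else 0

/-- The candidate `u` with `u 1 = u 2` as large as possible, and then `u 0`. As `gain` tests
feasibility, truncation, rounding and division by zero here can only lose precision. -/
def balanced (a r : Grid) : Grid :=
  let y := natMin (r.x /ₙ (1000 +ₙ a.y)) (r.y /ₙ (1000 +ₙ a.x))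
  let x := natMin (natMin (r.z -ₙ a.y *ₙ y) (r.y -ₙ a.z *ₙ y) /ₙ 1000)
    ((natMin r.z r.y -ₙ 1000 *ₙ y) /ₙ a.x)
  ⟨x, y, y⟩

/-- The candidate `u` that makes both constraints between `u 0` and `u 2`, or both between `u 0`
and `u 1`, tight, and has `u 2` and then `u 1` as large as possible. -/
def skewed (a r : Grid) : Grid :=
  let x := natMin (r.y *ₙ (1000 -ₙ a.z) /ₙ (1000000 -ₙ a.x *ₙ a.z))
    (r.z *ₙ (1000 -ₙ a.y) /ₙ (1000000 -ₙ a.x *ₙ a.y))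
  let z := natMin r.x (r.y -ₙ a.x *ₙ x) /ₙ 1000
  let y := natMin (natMin (r.z -ₙ a.x *ₙ x) (r.x -ₙ a.z *ₙ z) /ₙ 1000)
    (natMin (r.z -ₙ 1000 *ₙ x) (r.x -ₙ 1000 *ₙ z) /ₙ a.y)
  ⟨x, y, z⟩

/-- The larger `gain` of the two candidates. -/
def bestGain (a r : Grid) : ℕ :=
  natMax (gain a r (balanced a r)) (gain a r (skewed a r))

end Grid

/-- The box of all triples between two grid points. -/
structure Cell where
  (lo hi : Grid)

namespace Cell

/-- A test for `4 * (posScale a b * posScale b a) ≤ 52 / 5` on the product of two cells, based on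
`four_mul_posScale_mul_posScale`: `K` bounds the first square root there from above and `D` the
second one from below, both multiplied by `1000 ^ 2`. -/
def posTest (A B : Cell) : Bool :=
  let K := 2000000 +ₙ mixBound A.lo.x A.hi.x B.lo.x B.hi.x +ₙ
    mixBound A.lo.y A.hi.y B.lo.y B.hi.y +ₙ mixBound A.lo.z A.hi.z B.lo.z B.hi.z
  let D := 1000 *ₙ natMax (A.lo.total -ₙ B.hi.total) (B.lo.total -ₙ A.hi.total)
  5 *ₙ (K *ₙ K) ≤ₙ 52000000000000 +ₙ 5 *ₙ (D *ₙ D)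

/-- A test for the existence of slacks with `negScale e * negScale f ≤ 13 / 5` on the product of
two cells. -/
def negTest (A B : Cell) : Bool :=
  5 *ₙ ((2000000 -ₙ Grid.bestGain A.lo B.hi.room) *ₙ
    (2000000 -ₙ Grid.bestGain B.lo A.hi.room)) ≤ₙ 13000000000000

/-- A sufficient condition for a cell to contain no profile. -/
def isVoid (A : Cell) : Bool :=
  A.hi.x <ₙ A.lo.x || A.hi.y <ₙ A.lo.y || A.hi.z <ₙ A.lo.z ||
  1000000 <ₙ A.lo.x *ₙ (1000 +ₙ A.lo.y) || 1000000 <ₙ (A.lo.y +ₙ A.lo.z) *ₙ (1000 +ₙ A.lo.x)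

/-- A smaller cell with the same antitone triples. -/
def tighten (A : Cell) : Cell :=
  let y := natMax A.lo.y A.lo.z
  let y' := natMin A.hi.x A.hi.y
  ⟨⟨natMax A.lo.x y, y, A.lo.z⟩, ⟨A.hi.x, y', natMin y' A.hi.z⟩⟩

/-- The two parts of a cell below and above the rounded midpoint of its first edge. They share a
face, so they cover all real triples of the cell. -/
def halvesX (A : Cell) : List Cell :=
  let m := (A.lo.x +ₙ A.hi.x) /ₙ 2
  [⟨A.lo, { A.hi with x := m }⟩, ⟨{ A.lo with x := m }, A.hi⟩]

/-- The analogue of `halvesX` for the second edge. -/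
def halvesY (A : Cell) : List Cell :=
  let m := (A.lo.y +ₙ A.hi.y) /ₙ 2
  [⟨A.lo, { A.hi with y := m }⟩, ⟨{ A.lo with y := m }, A.hi⟩]

/-- The analogue of `halvesX` for the third edge. -/
def halvesZ (A : Cell) : List Cell :=
  let m := (A.lo.z +ₙ A.hi.z) /ₙ 2
  [⟨A.lo, { A.hi with z := m }⟩, ⟨{ A.lo with z := m }, A.hi⟩]

/-- The two halves of a cell, cut across a longest edge. -/
def halves (A : Cell) : List Cell :=
  let dx := A.hi.x -ₙ A.lo.x
  let dy := A.hi.y -ₙ A.lo.y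
  let dz := A.hi.z -ₙ A.lo.z
  bif natMax dx dz ≤ₙ dy then A.halvesY else bif dz ≤ₙ dx then A.halvesX else A.halvesZ

/-- Bisection with recursion depth `n`, certifying `HasPlacement a b` for all profiles `a` in `A`
and `b` in `B` with `b 0 ≤ a 0`. -/
def check : ℕ → Cell → Cell → Bool
  | 0, _, _ => false
  | n + 1, A, B =>
    A.isVoid || B.isVoid || A.hi.x <ₙ B.lo.x || posTest A B || negTest A B ||
      A.halves.all fun A' => B.halves.all fun B' => check n A'.tighten B'.tighten

/-- The cube `[0, 1]³`, which contains all profiles. -/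
def unit : Cell := ⟨⟨0, 0, 0⟩, ⟨1000, 1000, 1000⟩⟩

end Cell

end Algorithm

theorem natMax_eq_max (m n : ℕ) : natMax m n = max m n := by
  simp only [natMax, Nat.add_eq, Nat.sub_eq]
  lia

theorem natMin_eq_min (m n : ℕ) : natMin m n = min m n := by
  simp only [natMin, Nat.sub_eq]
  lia

theorem affine_le_max (p q : ℝ) {l x h : ℝ} (hl : l ≤ x) (hh : x ≤ h) :
    p + q * x ≤ max (p + q * l) (p + q * h) := by
  rcases le_total 0 q with hq | hq
  · exact le_max_of_le_right (by gcongr)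
  · exact le_max_of_le_left (by linarith [mul_le_mul_of_nonpos_left hl hq])

theorem le_mix (m n : ℕ) :
    1000000 * ((m / 1000 : ℝ) + n / 1000 - 2 * (m / 1000) * (n / 1000)) ≤ mix m n := by
  have h : 1000 * (m + n) ≤ mix m n + 2 * (m * n) := le_tsub_add
  have hcast : (1000 * (m + n) : ℝ) ≤ mix m n + 2 * (m * n) := mod_cast h
  linarith

theorem le_mixBound {l h l' h' : ℕ} {x y : ℝ} (hx : x ∈ Icc (l / 1000 : ℝ) (h / 1000))
    (hy : y ∈ Icc (l' / 1000 : ℝ) (h' / 1000)) :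
    1000000 * (x + y - 2 * x * y) ≤ mixBound l h l' h' := by
  have hmix (m : ℕ) : 1000000 * ((m / 1000 : ℝ) + y - 2 * (m / 1000) * y) ≤
      max (mix m l' : ℝ) (mix m h') := by
    have := affine_le_max (1000000 * (m / 1000)) (1000000 * (1 - 2 * (m / 1000))) hy.1 hy.2
    refine le_trans (by linarith) (this.trans (max_le_max ?_ ?_))
    · linarith [le_mix m l']
    · linarith [le_mix m h']
  have := affine_le_max (1000000 * y) (1000000 * (1 - 2 * y)) hx.1 hx.2
  simp only [mixBound, natMax_eq_max, Nat.cast_max]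
  refine le_trans (by linarith) (this.trans (max_le_max ?_ ?_))
  · linarith [hmix l]
  · linarith [hmix h]

namespace Grid

/-- The point encoded by `g`. -/
noncomputable def toReal (g : Grid) : Fin 3 → ℝ := ![g.x / 1000, g.y / 1000, g.z / 1000]

theorem cast_x (g : Grid) : (g.x : ℝ) = 1000 * g.toReal 0 :=
  (mul_div_cancel₀ _ (by norm_num)).symm

theorem cast_y (g : Grid) : (g.y : ℝ) = 1000 * g.toReal 1 :=
  (mul_div_cancel₀ _ (by norm_num)).symm

theorem cast_z (g : Grid) : (g.z : ℝ) = 1000 * g.toReal 2 :=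
  (mul_div_cancel₀ _ (by norm_num)).symm

theorem toReal_nonneg (g : Grid) : 0 ≤ g.toReal := by
  intro i
  fin_cases i <;> exact div_nonneg (Nat.cast_nonneg _) (by norm_num)

theorem cast_total (g : Grid) : (g.total : ℝ) = 1000 * ∑ i, g.toReal i := by
  simp only [total, Nat.add_eq, Nat.cast_add, cast_x, cast_y, cast_z, Fin.sum_univ_three]
  ring

theorem div_add_mul_div_le {l x y n : ℕ} {t : ℝ} (ht : t ≤ 1) (htn : t ≤ n / 1000)
    (h : 1000 * x + l * y ≤ 1000 * (1000 - n)) :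
    (x / 1000 + l / 1000 * (y / 1000) : ℝ) ≤ 1 - t := by
  have hroom : (1000 * (1000 - n) : ℕ) ≤ 1000000 * (1 - t) := by
    rcases le_total n 1000 with hn | hn
    · push_cast [hn]
      linarith
    · rw [Nat.sub_eq_zero_of_le hn, mul_zero, Nat.cast_zero]
      linarith
  have hcast : (1000 * x + l * y : ℝ) ≤ (1000 * (1000 - n) : ℕ) := mod_cast h
  linarith

variable {a b : Fin 3 → ℝ} {l h : Grid}

theorem cast_total_sub_total_le (hla : l.toReal ≤ a) (hbh : b ≤ h.toReal) :
    ((l.total - h.total : ℕ) : ℝ) ≤ 1000 * |∑ i, a i - ∑ i, b i| := by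
  have hsum : ∑ i, l.toReal i ≤ ∑ i, a i := Finset.sum_le_sum fun i _ => hla i
  have hsum' : ∑ i, b i ≤ ∑ i, h.toReal i := Finset.sum_le_sum fun i _ => hbh i
  rcases le_total l.total h.total with hle | hle
  · simp [Nat.sub_eq_zero_of_le hle]
  · rw [Nat.cast_sub hle, cast_total, cast_total]
    linarith [le_abs_self (∑ i, a i - ∑ i, b i)]

theorem add_mul_le_of_feasible (hb : ∀ i, b i ≤ 1) (hbh : b ≤ h.toReal) {u : Grid}
    (hf : feasible l h.room u = true) :
    ∀ i j k, i ≠ j → i ≠ k → j ≠ k → u.toReal i + l.toReal j * u.toReal j ≤ 1 - b k := by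
  simp only [feasible, room, Nat.add_eq, Nat.mul_eq, Nat.sub_eq, Bool.and_eq_true,
    Nat.ble_eq] at hf
  obtain ⟨⟨⟨⟨⟨hxy, hyx⟩, hxz⟩, hzx⟩, hyz⟩, hzy⟩ := hf
  intro i j k
  fin_cases i <;> fin_cases j <;> fin_cases k <;> intro hij hik hjk <;> try contradiction
  exacts [div_add_mul_div_le (hb 2) (hbh 2) hxy, div_add_mul_div_le (hb 1) (hbh 1) hxz,
    div_add_mul_div_le (hb 2) (hbh 2) hyx, div_add_mul_div_le (hb 0) (hbh 0) hyz,
    div_add_mul_div_le (hb 1) (hbh 1) hzx, div_add_mul_div_le (hb 0) (hbh 0) hzy]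

theorem exists_isSlack_of_gain (ha : IsProfile a) (hb : IsProfile b) (hla : l.toReal ≤ a)
    (hbh : b ≤ h.toReal) (u : Grid) :
    ∃ e, IsSlack a b e ∧ ∑ i, e i = gain l h.room u / 1000000 := by
  rcases hf : feasible l h.room u with _ | _
  · exact ⟨0, .zero ha hb, by simp [gain, hf]⟩
  refine ⟨l.toReal * u.toReal, ⟨mul_nonneg l.toReal_nonneg u.toReal_nonneg, ?_⟩, ?_⟩
  · intro i j k hij hik hjk
    calc l.toReal i * u.toReal i + a i * (l.toReal j * u.toReal j)
        ≤ a i * u.toReal i + a i * (l.toReal j * u.toReal j) := by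
          gcongr
          exacts [u.toReal_nonneg i, hla i]
      _ = a i * (u.toReal i + l.toReal j * u.toReal j) := by ring
      _ ≤ a i * (1 - b k) := by
          gcongr
          exacts [ha.nonneg i, add_mul_le_of_feasible hb.le_one hbh hf i j k hij hik hjk]
  · simp only [gain, hf, cond_true, Nat.add_eq, Nat.mul_eq, Nat.cast_add, Nat.cast_mul, cast_x,
      cast_y, cast_z, Fin.sum_univ_three, Pi.mul_apply]
    ring

theorem exists_isSlack_of_bestGain (ha : IsProfile a) (hb : IsProfile b) (hla : l.toReal ≤ a)
    (hbh : b ≤ h.toReal) :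
    ∃ e, IsSlack a b e ∧ 1000000 * negScale e ≤ (2000000 - bestGain l h.room : ℕ) := by
  obtain ⟨u, hu⟩ : ∃ u, bestGain l h.room = gain l h.room u := by
    rw [bestGain, natMax_eq_max]
    exact (max_choice _ _).elim (fun h => ⟨_, h⟩) (fun h => ⟨_, h⟩)
  obtain ⟨e, he, hsum⟩ := exists_isSlack_of_gain ha hb hla hbh u
  refine ⟨e, he, ?_⟩
  have hsub : (2000000 : ℝ) ≤ (2000000 - bestGain l h.room : ℕ) + gain l h.room u := by
    rw [hu]
    exact_mod_cast le_tsub_add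
  rw [negScale, hsum]
  linarith

end Grid

namespace Cell

open Grid

/-- The real box encoded by `A`. -/
def toSet (A : Cell) : Set (Fin 3 → ℝ) := Icc A.lo.toReal A.hi.toReal

variable {a b : Fin 3 → ℝ} {A B : Cell}

theorem mem_toSet_iff : a ∈ A.toSet ↔
    (A.lo.x ≤ 1000 * a 0 ∧ A.lo.y ≤ 1000 * a 1 ∧ A.lo.z ≤ 1000 * a 2) ∧
      1000 * a 0 ≤ A.hi.x ∧ 1000 * a 1 ≤ A.hi.y ∧ 1000 * a 2 ≤ A.hi.z := by
  simp [toSet, mem_Icc, Pi.le_def, Fin.forall_fin_succ, cast_x, cast_y, cast_z]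

theorem not_isVoid (ha : IsProfile a) (haA : a ∈ A.toSet) : ¬ A.isVoid = true := by
  have hx := (haA.1 0).trans (haA.2 0)
  have hy := (haA.1 1).trans (haA.2 1)
  have hz := (haA.1 2).trans (haA.2 2)
  have hmul : A.lo.toReal 0 * (1 + A.lo.toReal 1) ≤ 1 := by
    refine le_trans ?_ ha.mul_le_one
    have := A.lo.toReal_nonneg 1
    gcongr
    exacts [add_nonneg zero_le_one this, ha.nonneg 0, haA.1 0, haA.1 1]
  have hadd : (A.lo.toReal 1 + A.lo.toReal 2) * (1 + A.lo.toReal 0) ≤ 1 := by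
    refine le_trans ?_ ha.add_mul_le_one
    gcongr
    exacts [add_nonneg zero_le_one (A.lo.toReal_nonneg 0),
      add_nonneg (ha.nonneg 1) (ha.nonneg 2), haA.1 1, haA.1 2, haA.1 0]
  simp only [isVoid, Bool.or_eq_true, not_or, Nat.blt_eq, not_lt, Nat.add_eq,
    Nat.mul_eq, ← Nat.cast_le (α := ℝ), Nat.cast_add, Nat.cast_mul, cast_x, cast_y, cast_z]
  push_cast
  refine ⟨⟨⟨⟨?_, ?_⟩, ?_⟩, ?_⟩, ?_⟩ <;> linarith

theorem mem_toSet_tighten (ha : Antitone a) (haA : a ∈ A.toSet) : a ∈ A.tighten.toSet := by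
  have h01 : a 1 ≤ a 0 := ha (by decide)
  have h12 : a 2 ≤ a 1 := ha (by decide)
  simp only [mem_toSet_iff, tighten, natMax_eq_max, natMin_eq_min, Nat.cast_max, Nat.cast_min,
    max_le_iff, le_min_iff] at haA ⊢
  refine ⟨⟨⟨?_, ?_, ?_⟩, ⟨?_, ?_⟩, ?_⟩, ?_, ⟨?_, ?_⟩, ⟨?_, ?_⟩, ?_⟩ <;> linarith

theorem exists_mem_halves (haA : a ∈ A.toSet) : ∃ A' ∈ A.halves, a ∈ A'.toSet := by
  simp only [mem_toSet_iff] at haA ⊢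
  obtain ⟨⟨hx, hy, hz⟩, hx', hy', hz'⟩ := haA
  rw [halves]
  cases Nat.ble (natMax _ _) _
  · cases Nat.ble _ _
    · rcases le_total (1000 * a 2) ((A.lo.z + A.hi.z) / 2 : ℕ) with h | h
      · exact ⟨_, List.mem_cons_self, ⟨hx, hy, hz⟩, hx', hy', h⟩
      · exact ⟨_, List.mem_cons_of_mem _ List.mem_cons_self, ⟨hx, hy, h⟩, hx', hy', hz'⟩
    · rcases le_total (1000 * a 0) ((A.lo.x + A.hi.x) / 2 : ℕ) with h | h
      · exact ⟨_, List.mem_cons_self, ⟨hx, hy, hz⟩, h, hy', hz'⟩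
      · exact ⟨_, List.mem_cons_of_mem _ List.mem_cons_self, ⟨h, hy, hz⟩, hx', hy', hz'⟩
  · rcases le_total (1000 * a 1) ((A.lo.y + A.hi.y) / 2 : ℕ) with h | h
    · exact ⟨_, List.mem_cons_self, ⟨hx, hy, hz⟩, hx', h, hz'⟩
    · exact ⟨_, List.mem_cons_of_mem _ List.mem_cons_self, ⟨hx, h, hz⟩, hx', hy', hz'⟩

theorem hasPlacement_of_negTest (ha : IsProfile a) (hb : IsProfile b) (haA : a ∈ A.toSet)
    (hbB : b ∈ B.toSet) (h : negTest A B = true) : HasPlacement a b := by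
  obtain ⟨e, he, hle⟩ := exists_isSlack_of_bestGain ha hb haA.1 hbB.2
  obtain ⟨f, hf, hlf⟩ := exists_isSlack_of_bestGain hb ha hbB.1 haA.2
  refine .inr ⟨e, f, he, hf, ?_⟩
  simp only [negTest, Nat.mul_eq, Nat.sub_eq, Nat.ble_eq] at h
  have hcast := Nat.cast_le (α := ℝ).2 h
  rw [Nat.cast_mul 5, Nat.cast_mul] at hcast
  have hmul := mul_le_mul hle hlf (by linarith [hf.negScale_pos hb ha]) (Nat.cast_nonneg _)
  push_cast at hcast
  linarith

theorem two_add_sum_le_mixBound (haA : a ∈ A.toSet) (hbB : b ∈ B.toSet) :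
    1000000 * (2 + ∑ i, (a i + b i - 2 * a i * b i)) ≤
      (2000000 + mixBound A.lo.x A.hi.x B.lo.x B.hi.x +
        mixBound A.lo.y A.hi.y B.lo.y B.hi.y + mixBound A.lo.z A.hi.z B.lo.z B.hi.z : ℕ) := by
  have hx := le_mixBound ⟨haA.1 0, haA.2 0⟩ ⟨hbB.1 0, hbB.2 0⟩
  have hy := le_mixBound ⟨haA.1 1, haA.2 1⟩ ⟨hbB.1 1, hbB.2 1⟩
  have hz := le_mixBound ⟨haA.1 2, haA.2 2⟩ ⟨hbB.1 2, hbB.2 2⟩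
  push_cast [Fin.sum_univ_three]
  linarith

theorem hasPlacement_of_posTest (ha : IsProfile a) (hb : IsProfile b) (haA : a ∈ A.toSet)
    (hbB : b ∈ B.toSet) (h : posTest A B = true) : HasPlacement a b := by
  left
  have hK := two_add_sum_le_mixBound haA hbB
  have hD : ((max (A.lo.total - B.hi.total) (B.lo.total - A.hi.total) : ℕ) : ℝ) ≤
      1000 * |∑ i, a i - ∑ i, b i| := by
    rw [Nat.cast_max]
    refine max_le (cast_total_sub_total_le haA.1 hbB.2) ?_
    rw [abs_sub_comm]
    exact cast_total_sub_total_le hbB.1 haA.2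
  simp only [posTest, natMax_eq_max, Nat.add_eq, Nat.mul_eq, Nat.sub_eq, Nat.ble_eq] at h
  generalize 2000000 + _ + _ + _ = K at h hK
  generalize max (_ : ℕ) _ = D at h hD
  have hcast : (5 * (K * K) : ℝ) ≤ 52000000000000 + 5 * (1000 * D * (1000 * D)) := mod_cast h
  have hnonneg : 0 ≤ 2 + ∑ i, (a i + b i - 2 * a i * b i) := by
    refine add_nonneg zero_le_two (Finset.sum_nonneg fun i _ => ?_)
    linarith [mul_nonneg (ha.nonneg i) (sub_nonneg.2 (hb.le_one i)),
      mul_nonneg (hb.nonneg i) (sub_nonneg.2 (ha.le_one i))]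
  have hKsq := pow_le_pow_left₀ (by positivity) hK 2
  have hDsq := pow_le_pow_left₀ (Nat.cast_nonneg D) hD 2
  rw [mul_pow, sq_abs] at hDsq
  linarith [four_mul_posScale_mul_posScale a b]

theorem hasPlacement_of_check (ha : IsProfile a) (hb : IsProfile b) (hba : b 0 ≤ a 0) {n : ℕ}
    (h : check n A B = true) (haA : a ∈ A.toSet) (hbB : b ∈ B.toSet) : HasPlacement a b := by
  induction n generalizing A B with
  | zero => cases h
  | succ n ih =>
    have horder : B.lo.x ≤ A.hi.x := by
      rw [← Nat.cast_le (α := ℝ)]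
      linarith [(mem_toSet_iff.1 haA).2.1, (mem_toSet_iff.1 hbB).1.1]
    simp only [check, not_isVoid ha haA, not_isVoid hb hbB, Bool.or_eq_true, Nat.blt_eq,
      List.all_eq_true, horder.not_gt, Bool.false_eq_true, false_or] at h
    rcases h with (hpos | hneg) | hrec
    · exact hasPlacement_of_posTest ha hb haA hbB hpos
    · exact hasPlacement_of_negTest ha hb haA hbB hneg
    · obtain ⟨A', hA', haA'⟩ := exists_mem_halves haA
      obtain ⟨B', hB', hbB'⟩ := exists_mem_halves hbB
      exact ih (hrec A' hA' B' hB') (mem_toSet_tighten ha.antitone haA')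
        (mem_toSet_tighten hb.antitone hbB')

theorem check_unit : check 18 unit unit = true := by
  decide +kernel

end Cell

theorem IsProfile.mem_unit {a : Fin 3 → ℝ} (ha : IsProfile a) : a ∈ Cell.unit.toSet := by
  simp [Cell.mem_toSet_iff, Cell.unit, ha.nonneg, ha.le_one]

theorem IsProfile.hasPlacement {a b : Fin 3 → ℝ} (ha : IsProfile a) (hb : IsProfile b) :
    HasPlacement a b := by
  rcases le_total (b 0) (a 0) with h | h
  · exact Cell.hasPlacement_of_check ha hb h Cell.check_unit ha.mem_unit hb.mem_unit
  · exact (Cell.hasPlacement_of_check hb ha h Cell.check_unit hb.mem_unit ha.mem_unit).symm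

section Frame

theorem exists_third_index {i j : Fin 3} (hij : i ≠ j) :
    ∃ k, i ≠ k ∧ j ≠ k ∧ ∀ x : Fin 3 → ℝ, ∑ l, x l = x i + x j + x k := by
  obtain ⟨k, hik, hjk, huniv⟩ : ∃ k, i ≠ k ∧ j ≠ k ∧ Finset.univ = {i, j, k} := by
    revert i j
    decide
  refine ⟨k, hik, hjk, fun x => ?_⟩
  rw [huniv, Finset.sum_insert (by simp [hij, hik]), Finset.sum_pair hjk, add_assoc]

variable {V W : Type*} [AddCommGroup V] [Module ℝ V] [AddCommGroup W] [Module ℝ W]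
  {A : Set V} {B : Set W} {S : AffineBasis (Fin 3) ℝ V} {T : AffineBasis (Fin 3) ℝ W}
  {a b e : Fin 3 → ℝ}

namespace IsFrame

theorem exists_add_smul_mem_of_posScale (hB : Convex ℝ B) (hT : IsFrame B T a)
    (hS : IsFrame A S b) (ha : ∀ i, a i ≤ 1) :
    ∃ w, ∀ x ∈ A, w + (posScale a b)⁻¹ • ∑ i, S.coord i x • T i ∈ B := by
  have hpos := posScale_pos ha hS.nonneg
  set c := (posScale a b)⁻¹
  refine ⟨∑ i, (c * ((1 - a i) * b i)) • T i, fun x hx => ?_⟩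
  simp only [Finset.smul_sum, smul_smul, ← Finset.sum_add_distrib, ← add_smul, ← mul_add]
  refine hT.sum_smul_mem hB ?_ fun i j hij => ?_
  · rw [← Finset.mul_sum, Finset.sum_add_distrib, S.sum_coord_apply_eq_one, add_comm]
    exact inv_mul_cancel₀ hpos.ne'
  · obtain ⟨k, -, -, hsum⟩ := exists_third_index hij
    have hxsum := S.sum_coord_apply_eq_one x
    rw [hsum] at hxsum
    have hxij : 0 ≤ S.coord i x + S.coord j x := by linarith [hS.coord_le_one hx k]
    have hxi : 0 ≤ S.coord i x + b i := by linarith [hS.neg_le_coord hx i]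
    calc 0 ≤ c * ((1 - a i) * (S.coord i x + b i) + a i * (S.coord i x + S.coord j x) +
            a i * ((1 - a j) * b j)) := by
          have := hT.nonneg i
          have := hS.nonneg j
          have := sub_nonneg.2 (ha i)
          have := sub_nonneg.2 (ha j)
          positivity
      _ = _ := by ring

theorem exists_add_smul_mem_of_isSlack (hB : Convex ℝ B) (hT : IsFrame B T a)
    (hS : IsFrame A S b) (ha : ∀ i, a i ≤ 1) (he : IsSlack a b e) (hpos : 0 < negScale e) :
    ∃ w, ∀ x ∈ A, w + (-(negScale e)⁻¹) • ∑ i, S.coord i x • T i ∈ B := by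
  set c := (negScale e)⁻¹
  refine ⟨∑ i, (c * (1 - e i)) • T i, fun x hx => ?_⟩
  simp only [Finset.smul_sum, smul_smul, ← Finset.sum_add_distrib, ← add_smul, neg_mul,
    ← sub_eq_add_neg, ← mul_sub]
  refine hT.sum_smul_mem hB ?_ fun i j hij => ?_
  · have hsum : ∑ i, (1 - e i - S.coord i x) = negScale e := by
      rw [Finset.sum_sub_distrib, Finset.sum_sub_distrib, S.sum_coord_apply_eq_one, negScale,
        Fin.sum_const, nsmul_one]
      push_cast
      ring
    rw [← Finset.mul_sum, hsum]
    exact inv_mul_cancel₀ hpos.ne'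
  · obtain ⟨k, hik, hjk, hsum⟩ := exists_third_index hij
    have hxsum := S.sum_coord_apply_eq_one x
    rw [hsum] at hxsum
    have hslack := he.add_mul_le i j k hij hik hjk
    have hxk : a i * (1 - b k) ≤ a i * (1 + S.coord k x) :=
      mul_le_mul_of_nonneg_left (by linarith [hS.neg_le_coord hx k]) (hT.nonneg i)
    have hxi := mul_nonneg (sub_nonneg.2 (ha i)) (sub_nonneg.2 (hS.coord_le_one hx i))
    calc 0 ≤ c * ((1 - a i) * (1 - S.coord i x) + a i * (1 + S.coord k x)
            - (e i + a i * e j)) := mul_nonneg (inv_nonneg.2 hpos.le) (by linarith)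
      _ = _ := by rw [show S.coord k x = 1 - S.coord i x - S.coord j x by linarith]; ring

theorem exists_placements (hA : Convex ℝ A) (hB : Convex ℝ B) (hS : IsFrame A S a)
    (hT : IsFrame B T b) (ha : IsProfile a) (hb : IsProfile b) :
    ∃ (k k' : ℝ) (v : W) (v' : V), 5 / 13 ≤ k * k' ∧
      (∀ x ∈ A, v + k • ∑ i, S.coord i x • T i ∈ B) ∧
      ∀ y ∈ B, v' + k' • ∑ i, T.coord i y • S i ∈ A := by
  have hinv {p q : ℝ} (hp : 0 < p) (hq : 0 < q) (h : p * q ≤ 13 / 5) : 5 / 13 ≤ q⁻¹ * p⁻¹ := by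
    rw [← mul_inv_rev, ← inv_div]
    exact inv_anti₀ (mul_pos hp hq) h
  rcases ha.hasPlacement hb with h | ⟨e, f, he, hf, h⟩
  · have hab := posScale_pos ha.le_one hb.nonneg
    have hba := posScale_pos hb.le_one ha.nonneg
    obtain ⟨v, hv⟩ := hT.exists_add_smul_mem_of_posScale hB hS hb.le_one
    obtain ⟨v', hv'⟩ := hS.exists_add_smul_mem_of_posScale hA hT ha.le_one
    exact ⟨_, _, v, v', hinv hab hba h, hv, hv'⟩
  · have hepos := he.negScale_pos ha hb
    have hfpos := hf.negScale_pos hb ha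
    obtain ⟨v, hv⟩ := hT.exists_add_smul_mem_of_isSlack hB hS hb.le_one hf hfpos
    obtain ⟨v', hv'⟩ := hS.exists_add_smul_mem_of_isSlack hA hT ha.le_one he hepos
    exact ⟨_, _, v, v', (hinv hepos hfpos h).trans_eq (neg_mul_neg _ _).symm, hv, hv'⟩

end IsFrame

end Frame

section Homothety

variable {V W : Type*} [AddCommGroup V] [Module ℝ V] [AddCommGroup W] [Module ℝ W]

theorem exists_subset_homothety_image {D B : Set W} (hD : Convex ℝ D) (hne : D.Nonempty)
    {l m : ℝ} (hl : 1 < l) (hlm : 1 ≤ l * m) {p : W} (hp : ∀ y ∈ B, p + m • y ∈ D) :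
    ∃ c, B ⊆ AffineMap.homothety c l '' D := by
  obtain ⟨d, hd⟩ := hne
  -- Shrinking towards `d` brings the factor `m` down to exactly `l⁻¹`.
  set t := (l * m)⁻¹ with ht
  set q := (1 - t) • d + t • p with hq
  have hl0 : l ≠ 0 := by positivity
  have hl1 : l - 1 ≠ 0 := (sub_pos.2 hl).ne'
  have htm : t * m = l⁻¹ := by
    have : m ≠ 0 := by
      rintro rfl
      linarith
    rw [ht]
    field_simp
  refine ⟨(l / (l - 1)) • q, fun y hy => ⟨q + l⁻¹ • y, ?_, ?_⟩⟩
  · have hmem := hD hd (hp y hy) (sub_nonneg.2 (inv_le_one_of_one_le₀ hlm))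
      (inv_nonneg.2 (zero_le_one.trans hlm)) (sub_add_cancel 1 t)
    rwa [smul_add, smul_smul, htm, ← add_assoc] at hmem
  · clear_value q
    simp only [AffineMap.homothety_apply, vsub_eq_sub, vadd_eq_add]
    match_scalars <;> field_simp
    ring

theorem exists_affineEquiv_of_placements {A : Set V} {B : Set W} (hA : Convex ℝ A)
    (hne : A.Nonempty) (φ : V ≃ᵃ[ℝ] W) {k k' l : ℝ} (hl : 1 < l) (hk : 1 ≤ l * (k * k'))
    {v : W} {v' : V} (h : ∀ x ∈ A, v + k • φ x ∈ B) (h' : ∀ y ∈ B, v' + k' • φ.symm y ∈ A) :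
    ∃ (T : V ≃ᵃ[ℝ] W) (c : W), T '' A ⊆ B ∧ B ⊆ AffineMap.homothety c l '' (T '' A) := by
  have hk0 : k ≠ 0 := by
    rintro rfl
    linarith
  obtain ⟨T, hT⟩ : ∃ T : V ≃ᵃ[ℝ] W, ∀ x, T x = v + k • φ x :=
    ⟨(φ.trans (LinearEquiv.smulOfNeZero ℝ W k hk0).toAffineEquiv).trans
      (AffineEquiv.constVAdd ℝ W v), fun x => rfl⟩
  have hTB : T '' A ⊆ B := by
    rintro _ ⟨x, hx, rfl⟩
    exact hT x ▸ h x hx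
  have hcomp (y : W) : v + k • (φ v' - k' • φ 0) + (k * k') • y = T (v' + k' • φ.symm y) := by
    have hφ (x z : V) : φ (x + z) = φ x + φ.linear z := by
      simpa [add_comm] using φ.map_vadd x z
    have hy : φ 0 + φ.linear (φ.symm y) = y := by rw [← hφ, zero_add, φ.apply_symm_apply]
    rw [hT, hφ, map_smul]
    nth_rw 1 [← hy]
    module
  obtain ⟨c, hc⟩ := exists_subset_homothety_image (hA.affine_image T.toAffineMap) (hne.image T)
    hl hk fun y hy => (hcomp y).symm ▸ mem_image_of_mem T (h' y hy)
  exact ⟨T, c, hTB, hc⟩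

end Homothety

end BanachMazur

open BanachMazur

theorem stmt_0_general {V W : Type*} [NormedAddCommGroup V] [NormedSpace ℝ V]
    [NormedAddCommGroup W] [NormedSpace ℝ W] (hV : Module.finrank ℝ V = 2)
    (hW : Module.finrank ℝ W = 2) {A : Set V} {B : Set W} (hA : Convex ℝ A) (hAc : IsCompact A)
    (hAi : (interior A).Nonempty) (hB : Convex ℝ B) (hBc : IsCompact B)
    (hBi : (interior B).Nonempty) :
    ∃ (T : V ≃ᵃ[ℝ] W) (c : W),
      T '' A ⊆ B ∧ B ⊆ AffineMap.homothety c (13 / 5 : ℝ) '' (T '' A) := by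
  have hAspan := affineSpan_eq_top_of_nonempty_interior (hA.convexHull_eq.symm ▸ hAi)
  have hBspan := affineSpan_eq_top_of_nonempty_interior (hB.convexHull_eq.symm ▸ hBi)
  obtain ⟨S, a, hS, ha⟩ := exists_isFrame_isProfile hV hAc hAspan
  obtain ⟨T, b, hT, hb⟩ := exists_isFrame_isProfile hW hBc hBspan
  obtain ⟨k, k', v, v', hk, hv, hv'⟩ := hS.exists_placements hA hB hT ha hb
  obtain ⟨φ, hφ, hφsymm⟩ := exists_affineEquiv_eq_sum S T
  simp only [← hφ, ← hφsymm] at hv hv'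
  exact exists_affineEquiv_of_placements hA (hAi.mono interior_subset) φ (by norm_num)
    (by linarith) hv hv'

theorem stmt_0 (A B : Set (ℝ × ℝ)) (hA : IsConvexBody A) (hB : IsConvexBody B) :
    ∃ (T : ℝ × ℝ ≃ᵃ[ℝ] ℝ × ℝ) (c : ℝ × ℝ) (l : ℝ),
      1 ≤ l ∧ l ≤ (19 - Real.sqrt 73) / 4 ∧
      T '' A ⊆ B ∧ B ⊆ AffineMap.homothety c l '' (T '' A) := by
  have hsqrt : Real.sqrt 73 ≤ 43 / 5 := Real.sqrt_le_iff.2 (by norm_num)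
  have hdim : Module.finrank ℝ (ℝ × ℝ) = 2 := by simp
  obtain ⟨T, c, hT⟩ := stmt_0_general hdim hdim hA.1 hA.2.1 hA.2.2 hB.1 hB.2.1 hB.2.2
  exact ⟨T, c, 13 / 5, by norm_num, by linarith, hT⟩
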